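/- Suppose η : ℝ → ℝ is continuous and differentiable at b ∈ ℝ. The no-reflection barrier value Ṽ_b is continuously differentiable on ℝ, satisfies ℒṼ_b(x) = −r·Ṽ_b(x) + μ·Ṽ_b'(x) + (σ²/2)·Ṽ_b''(x) = 0 for all x < b and Ṽ_b'(x) = η(x) for all x > b, and Ṽ_b is twice differentiable at b if and only if γ₊·η(b) = η'(b). -/

import Mathlib

/-!
`γ₊` is the positive root of `σ² / 2 * γ² + μ * γ = r`, the characteristic equation of `ℒ`, so the
exponential branch of `Ṽ_b` is annihilated by `ℒ`. The factor `γ₊⁻¹ * η b` makes both the values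
and the slopes of the two branches agree at `b`, whence `Ṽ_b` is `C¹` with derivative
`η b * exp (γ₊ * (x - b))` to the left of `b` and `η` to the right. The one-sided slopes of this
derivative at `b` are `γ₊ * η b` and `η' b`, and it is differentiable there iff they coincide.
-/

open Set Filter Topology

section Pasting

variable {E : Type*} [NormedAddCommGroup E] [NormedSpace ℝ E] {g h : ℝ → E} {b x : ℝ}

theorem hasDerivWithinAt_Iic_ite_le {d : E} (hg : HasDerivWithinAt g d (Iic b) x) (hx : x ≤ b) :
    HasDerivWithinAt (fun y => if y ≤ b then g y else h y) d (Iic b) x :=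
  hg.congr_of_mem (fun _ hy => if_pos hy) hx

theorem hasDerivWithinAt_Ici_ite_le {d : E} (hh : HasDerivWithinAt h d (Ici b) x)
    (hgh : g b = h b) (hx : b ≤ x) :
    HasDerivWithinAt (fun y => if y ≤ b then g y else h y) d (Ici b) x := by
  refine hh.congr_of_mem (fun y hy => ?_) hx
  split_ifs with hyb
  · rw [le_antisymm hyb hy, hgh]
  · rfl

theorem hasDerivAt_ite_le {g' h' : ℝ → E}
    (hg : ∀ x ≤ b, HasDerivWithinAt g (g' x) (Iic b) x)
    (hh : ∀ x, b ≤ x → HasDerivWithinAt h (h' x) (Ici b) x)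
    (hgh : g b = h b) (hgh' : g' b = h' b) (x : ℝ) :
    HasDerivAt (fun y => if y ≤ b then g y else h y) (if x ≤ b then g' x else h' x) x := by
  rcases lt_trichotomy x b with hx | rfl | hx
  · rw [if_pos hx.le]
    exact (hasDerivWithinAt_Iic_ite_le (hg x hx.le) hx.le).hasDerivAt (Iic_mem_nhds hx)
  · rw [if_pos le_rfl, ← hasDerivWithinAt_univ, ← Iic_union_Ici (a := x)]
    exact (hasDerivWithinAt_Iic_ite_le (hg x le_rfl) le_rfl).union
      (hasDerivWithinAt_Ici_ite_le (hgh' ▸ hh x le_rfl) hgh le_rfl)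
  · rw [if_neg hx.not_ge]
    exact (hasDerivWithinAt_Ici_ite_le (hh x hx.le) hgh hx.le).hasDerivAt (Ici_mem_nhds hx)

theorem differentiableAt_ite_le_iff {g' h' : E} (hg : HasDerivWithinAt g g' (Iic b) b)
    (hh : HasDerivWithinAt h h' (Ici b) b) (hgh : g b = h b) :
    DifferentiableAt ℝ (fun y => if y ≤ b then g y else h y) b ↔ g' = h' := by
  have left := hasDerivWithinAt_Iic_ite_le (h := h) hg le_rfl
  have right := hasDerivWithinAt_Ici_ite_le hh hgh le_rfl
  constructor
  · intro hd
    have eq_left := (uniqueDiffWithinAt_Iic b).eq_deriv _ hd.hasDerivAt.hasDerivWithinAt left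
    have eq_right := (uniqueDiffWithinAt_Ici b).eq_deriv _ hd.hasDerivAt.hasDerivWithinAt right
    exact eq_left.symm.trans eq_right
  · rintro rfl
    have hd := left.union right
    rw [Iic_union_Ici, hasDerivWithinAt_univ] at hd
    exact hd.differentiableAt

theorem hasDerivWithinAt_Ici_integral [CompleteSpace E] {f : ℝ → E} (hf : ContinuousOn f (Ici b))
    (hx : b ≤ x) : HasDerivWithinAt (fun y => ∫ u in b..y, f u) (f x) (Ici b) x := by
  -- Extending `f` by the constant `f b` to the left of `b` reduces to a continuous integrand.
  have hcont : Continuous fun u => f (max b u) :=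
    hf.comp_continuous (by fun_prop) fun u => le_max_left b u
  have integral_eq : ∀ y ∈ Ici b, ∫ u in b..y, f u = ∫ u in b..y, f (max b u) := by
    intro y hy
    refine intervalIntegral.integral_congr fun u hu => ?_
    rw [uIcc_of_le hy] at hu
    simp only [max_eq_right hu.1]
  have hderiv := (hcont.integral_hasStrictDerivAt b x).hasDerivAt.hasDerivWithinAt (s := Ici b)
  rw [max_eq_right hx] at hderiv
  exact hderiv.congr integral_eq (integral_eq x hx)

end Pasting

section Characteristic

theorem hasDerivAt_const_mul_exp (c γ b x : ℝ) :
    HasDerivAt (fun y => c * Real.exp (γ * (y - b))) (γ * c * Real.exp (γ * (x - b))) x := by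
  have h := (((hasDerivAt_id' x).sub_const b).const_mul γ).exp.const_mul c
  exact h.congr_deriv (by ring)

theorem deriv_const_mul_exp (c γ b : ℝ) :
    deriv (fun y => c * Real.exp (γ * (y - b))) = fun y => γ * c * Real.exp (γ * (y - b)) :=
  funext fun x => (hasDerivAt_const_mul_exp c γ b x).deriv

/-- The coefficient `γ₊`: the larger root of the characteristic equation
`σ ^ 2 / 2 * γ ^ 2 + μ * γ = r` of the operator `ℒ`. -/
noncomputable def gammaPlus (μ σ r : ℝ) : ℝ :=
  (-μ + Real.sqrt (μ ^ 2 + 2 * r * σ ^ 2)) / σ ^ 2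

variable {μ σ r : ℝ}

theorem gammaPlus_pos (hσ : σ ≠ 0) (hr : 0 < r) : 0 < gammaPlus μ σ r := by
  have sqrt_gt : μ < Real.sqrt (μ ^ 2 + 2 * r * σ ^ 2) :=
    Real.lt_sqrt_of_sq_lt (lt_add_of_pos_right _ (by positivity))
  exact div_pos (by linarith) (by positivity)

theorem gammaPlus_characteristic (hσ : σ ≠ 0) (hdisc : 0 ≤ μ ^ 2 + 2 * r * σ ^ 2) :
    σ ^ 2 / 2 * gammaPlus μ σ r ^ 2 + μ * gammaPlus μ σ r = r := by
  have discrim_eq : discrim (σ ^ 2 / 2) μ (-r) =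
      Real.sqrt (μ ^ 2 + 2 * r * σ ^ 2) * Real.sqrt (μ ^ 2 + 2 * r * σ ^ 2) := by
    rw [Real.mul_self_sqrt hdisc, discrim]
    ring
  have root := (quadratic_eq_zero_iff (by positivity) discrim_eq (gammaPlus μ σ r)).2
    (Or.inl (by rw [gammaPlus, mul_div_cancel₀ (σ ^ 2) two_ne_zero]))
  linarith

end Characteristic

/-- The no-reflection barrier value `Ṽ_b`, with an arbitrary exponent `γ` in place of `γ₊`. -/
noncomputable def barrierValue (γ : ℝ) (η : ℝ → ℝ) (b x : ℝ) : ℝ :=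
  if x ≤ b then γ⁻¹ * η b * Real.exp (γ * (x - b)) else γ⁻¹ * η b + ∫ u in b..x, η u

section BarrierValue

variable {γ b : ℝ} {η : ℝ → ℝ}

theorem hasDerivAt_barrierValue (hγ : γ ≠ 0) (hη : ContinuousOn η (Ici b)) (x : ℝ) :
    HasDerivAt (barrierValue γ η b) (if x ≤ b then η b * Real.exp (γ * (x - b)) else η x) x := by
  have left (y : ℝ) : HasDerivAt (fun y => γ⁻¹ * η b * Real.exp (γ * (y - b)))
      (η b * Real.exp (γ * (y - b))) y := by
    simpa only [mul_inv_cancel_left₀ hγ] using hasDerivAt_const_mul_exp (γ⁻¹ * η b) γ b y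
  have right (y : ℝ) (hy : b ≤ y) :
      HasDerivWithinAt (fun y => γ⁻¹ * η b + ∫ u in b..y, η u) (η y) (Ici b) y :=
    (hasDerivWithinAt_Ici_integral hη hy).const_add _
  exact hasDerivAt_ite_le (fun y _ => (left y).hasDerivWithinAt) right (by simp) (by simp) x

theorem deriv_barrierValue (hγ : γ ≠ 0) (hη : ContinuousOn η (Ici b)) :
    deriv (barrierValue γ η b) = fun x => if x ≤ b then η b * Real.exp (γ * (x - b)) else η x :=
  funext fun x => (hasDerivAt_barrierValue hγ hη x).deriv

theorem contDiff_one_barrierValue (hγ : γ ≠ 0) (hη : ContinuousOn η (Ici b)) :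
    ContDiff ℝ 1 (barrierValue γ η b) := by
  rw [contDiff_one_iff_deriv, deriv_barrierValue hγ hη]
  refine ⟨fun x => (hasDerivAt_barrierValue hγ hη x).differentiableAt, ?_⟩
  refine continuous_if_le continuous_id continuous_const (by fun_prop) hη ?_
  rintro x rfl
  simp only [sub_self, mul_zero, Real.exp_zero, mul_one]

theorem barrierValue_ode {μ σ r x : ℝ} (hroot : σ ^ 2 / 2 * γ ^ 2 + μ * γ = r) (hx : x < b) :
    -r * barrierValue γ η b x + μ * deriv (barrierValue γ η b) x
      + σ ^ 2 / 2 * deriv (deriv (barrierValue γ η b)) x = 0 := by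
  have eq_exp : barrierValue γ η b =ᶠ[𝓝 x] fun y => γ⁻¹ * η b * Real.exp (γ * (y - b)) :=
    eventually_of_mem (Iic_mem_nhds hx) fun _ hy => if_pos hy
  rw [eq_exp.eq_of_nhds, eq_exp.deriv_eq, eq_exp.deriv.deriv_eq, deriv_const_mul_exp,
    deriv_const_mul_exp, ← hroot]
  ring

theorem differentiableAt_deriv_barrierValue_iff {η' : ℝ} (hγ : γ ≠ 0)
    (hη : ContinuousOn η (Ici b)) (hη' : HasDerivWithinAt η η' (Ici b) b) :
    DifferentiableAt ℝ (deriv (barrierValue γ η b)) b ↔ γ * η b = η' := by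
  have hexp := hasDerivAt_const_mul_exp (η b) γ b b
  rw [sub_self, mul_zero, Real.exp_zero, mul_one] at hexp
  rw [deriv_barrierValue hγ hη]
  exact differentiableAt_ite_le_iff hexp.hasDerivWithinAt hη' (by simp)

end BarrierValue

theorem stmt16_general {μ σ r γ b η' : ℝ} {η : ℝ → ℝ} (hγ : γ ≠ 0)
    (hroot : σ ^ 2 / 2 * γ ^ 2 + μ * γ = r) (hη : ContinuousOn η (Ici b))
    (hη' : HasDerivWithinAt η η' (Ici b) b) :
    ContDiff ℝ 1 (barrierValue γ η b) ∧
    (∀ x < b, -r * barrierValue γ η b x + μ * deriv (barrierValue γ η b) x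
      + σ ^ 2 / 2 * deriv (deriv (barrierValue γ η b)) x = 0) ∧
    (∀ x > b, deriv (barrierValue γ η b) x = η x) ∧
    (DifferentiableAt ℝ (deriv (barrierValue γ η b)) b ↔ γ * η b = η') := by
  refine ⟨contDiff_one_barrierValue hγ hη, fun x hx => barrierValue_ode hroot hx, fun x hx => ?_,
    differentiableAt_deriv_barrierValue_iff hγ hη hη'⟩
  simp only [deriv_barrierValue hγ hη, if_neg hx.not_ge]

/-- For continuous `η` differentiable at `b`, the no-reflection barrier value `Ṽ_b` is `C¹`
on `ℝ`, satisfies `ℒṼ_b(x) = 0` for `x < b` and `Ṽ_b'(x) = η(x)` for `x > b`, and `Ṽ_b`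
is twice differentiable at `b` iff `γ₊·η(b) = η'(b)`. -/
theorem stmt16 (μ σ r : ℝ) (hσ : 0 < σ) (hr : 0 < r)
    (γp : ℝ)
    (hγp : γp = (-μ + Real.sqrt (μ ^ 2 + 2 * r * σ ^ 2)) / σ ^ 2)
    (η : ℝ → ℝ) (hcont : Continuous η)
    (b : ℝ) (hηb : DifferentiableAt ℝ η b)
    (Vb : ℝ → ℝ)
    (hVb : ∀ x, Vb x =
      if x ≤ b then γp⁻¹ * η b * Real.exp (γp * (x - b))
      else γp⁻¹ * η b + ∫ u in b..x, η u) :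
    ContDiff ℝ 1 Vb ∧
    (∀ x < b, -r * Vb x + μ * deriv Vb x + σ ^ 2 / 2 * deriv (deriv Vb) x = 0) ∧
    (∀ x > b, deriv Vb x = η x) ∧
    (DifferentiableAt ℝ (deriv Vb) b ↔ γp * η b = deriv η b) := by
  obtain rfl : Vb = barrierValue γp η b := funext hVb
  obtain rfl : γp = gammaPlus μ σ r := hγp
  exact stmt16_general (gammaPlus_pos hσ.ne' hr).ne'
    (gammaPlus_characteristic hσ.ne' (by positivity)) hcont.continuousOn
    hηb.hasDerivAt.hasDerivWithinAt
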